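/- Asymptotic Markov chains at later hops: under the K-hop change of measure with liminf_{n→∞} Δ_k > 0, and with U_ℓ := (M̃_ℓ, Ỹ₀^{T−1},…,Ỹ_k^{T−1}, T) and Ỹ_j := Ỹ_{j,T}, for every ℓ ∈ {2,…,k}: lim_{n→∞} I(Ỹ_ℓ,…,Ỹ_k; U_ℓ | Ỹ₀,…,Ỹ_{ℓ−1}) = 0, and consequently lim_{n→∞} I(U_ℓ; Ỹ_ℓ | Ỹ_{ℓ−1}) = 0. -/

import Mathlib

open Filter

noncomputable section

/-- `p` is a probability mass function on the finite alphabet `α`. -/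
def IsPMF {α : Type*} [Fintype α] (p : α → ℝ) : Prop :=
  (∀ a, 0 ≤ p a) ∧ ∑ a, p a = 1

open Classical in
/-- Probability that the random variable `X` takes the value `a`, under the pmf `p`. -/
def probEq {Ω α : Type*} [Fintype Ω] (p : Ω → ℝ) (X : Ω → α) (a : α) : ℝ :=
  ∑ ω, if X ω = a then p ω else 0

/-- Shannon entropy (base 2) of the random variable `X` under the pmf `p`. -/
def entOf {Ω α : Type*} [Fintype Ω] (p : Ω → ℝ) (X : Ω → α) : ℝ :=
  -∑ ω, p ω * Real.logb 2 (probEq p X (X ω))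

/-- Conditional Shannon entropy `H(X | Y)` under the pmf `p`. -/
def condEntOf {Ω α β : Type*} [Fintype Ω] (p : Ω → ℝ) (X : Ω → α) (Y : Ω → β) : ℝ :=
  entOf p (fun ω => (X ω, Y ω)) - entOf p Y

/-- Mutual information `I(X ; Y)` under the pmf `p`. -/
def miOf {Ω α β : Type*} [Fintype Ω] (p : Ω → ℝ) (X : Ω → α) (Y : Ω → β) : ℝ :=
  entOf p X + entOf p Y - entOf p (fun ω => (X ω, Y ω))

/-- Conditional mutual information `I(X ; Y | Z)` under the pmf `p`. -/
def condMIOf {Ω α β γ : Type*} [Fintype Ω] (p : Ω → ℝ) (X : Ω → α) (Y : Ω → β)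
    (Z : Ω → γ) : ℝ :=
  condEntOf p X Z + condEntOf p Y Z - condEntOf p (fun ω => (X ω, Y ω)) Z

open Classical in
/-- Probability of the set `S` under the pmf `p`. -/
def probSet {Ω : Type*} [Fintype Ω] (p : Ω → ℝ) (S : Set Ω) : ℝ :=
  ∑ ω, if ω ∈ S then p ω else 0

open Classical in
/-- Number of occurrences of the symbol `a` in the sequence `w`. -/
def Ncount {W : Type*} {n : ℕ} (w : Fin n → W) (a : W) : ℕ :=
  (Finset.univ.filter (fun i => w i = a)).card

/-- The strongly typical set `T_μ⁽ⁿ⁾(P)`. -/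
def typicalSet {W : Type*} [Fintype W] (P : W → ℝ) (μ : ℝ) (n : ℕ) : Set (Fin n → W) :=
  {w | ∀ a, |((Ncount w a : ℝ)) / n - P a| ≤ μ ∧ (P a = 0 → Ncount w a = 0)}

/-- The typicality parameter `μ_n = n^{-1/3}`. -/
def μseq (n : ℕ) : ℝ := (n : ℝ) ^ (-(1/3 : ℝ))

section KHop

variable (k : ℕ) (Y : ℕ → Type) [∀ i, Fintype (Y i)] [∀ i, Nonempty (Y i)]

/-- The index `j` viewed as an element of `Fin (k+1)`. -/
def idxLo (j : Fin k) : Fin (k + 1) := ⟨(j : ℕ), Nat.lt_succ_of_lt j.isLt⟩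

/-- The index `j+1` viewed as an element of `Fin (k+1)`. -/
def idxHi (j : Fin k) : Fin (k + 1) := ⟨(j : ℕ) + 1, Nat.succ_lt_succ j.isLt⟩

variable (P : (∀ i : Fin (k + 1), Y i) → ℝ)

/-- The i.i.d. law of the source tuple `(Y₀ⁿ,…,Y_kⁿ)` under hypothesis `H = 0`. -/
def iidK (n : ℕ) (ys : ∀ i : Fin (k + 1), Fin n → Y i) : ℝ :=
  ∏ t : Fin n, P (fun i => ys i t)

open Classical in
/-- The marginal pmf of `Y_i` under `P`. -/
def margK (i : Fin (k + 1)) (c : Y i) : ℝ :=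
  ∑ y : ∀ i : Fin (k + 1), Y i, if y i = c then P y else 0

/-- The product of the marginals `P_{Y₀}·P_{Y₁}⋯P_{Y_k}`. -/
def prodMargK (y : ∀ i : Fin (k + 1), Y i) : ℝ := ∏ i, margK k Y P i (y i)

/-- The i.i.d. law of the source tuple under hypothesis `H = 1` (product of marginals). -/
def iidQK (n : ℕ) (ys : ∀ i : Fin (k + 1), Fin n → Y i) : ℝ :=
  ∏ t : Fin n, prodMargK k Y P (fun i => ys i t)

open Classical in
/-- The pairwise marginal `P_{Y_j Y_{j+1}}` of `P`. -/
def pairMargK (j : Fin k) (a : Y (j : ℕ)) (b : Y ((j : ℕ) + 1)) : ℝ :=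
  ∑ y : ∀ i : Fin (k + 1), Y i, if y (idxLo k j) = a ∧ y (idxHi k j) = b then P y else 0

open Classical in
/-- `P` forms the Markov chain `Y₀ → Y₁ → ⋯ → Y_k`. -/
def IsMarkovChainK : Prop :=
  ∀ y : ∀ i : Fin (k + 1), Y i,
    P y * ∏ i ∈ Finset.univ.filter (fun i : Fin (k + 1) => 0 < (i : ℕ) ∧ (i : ℕ) < k),
        margK k Y P i (y i)
      = ∏ j : Fin k, pairMargK k Y P j (y (idxLo k j)) (y (idxHi k j))

/-- Extension of a source tuple to all natural indices (junk beyond `k`). -/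
def extendTup (n : ℕ) (ys : ∀ i : Fin (k + 1), Fin n → Y i) (ℓ : ℕ) : Fin n → Y ℓ :=
  if h : ℓ < k + 1 then ys ⟨ℓ, h⟩ else fun _ => Classical.arbitrary (Y ℓ)

/-- The messages computed recursively from the encoders:
`msgRec φ ys' ℓ` is the message `M_{ℓ+1}`. -/
def msgRec (n : ℕ) (φ : ∀ ℓ : ℕ, (Fin n → Y ℓ) → ℕ → ℕ)
    (ys' : ∀ ℓ : ℕ, Fin n → Y ℓ) : ℕ → ℕ
  | 0 => φ 0 (ys' 0) 0
  | (ℓ + 1) => φ (ℓ + 1) (ys' (ℓ + 1)) (msgRec n φ ys' ℓ)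

/-- A source tuple viewed as one sequence over the product alphabet. -/
def tupleSeq {n : ℕ} (ys : ∀ i : Fin (k + 1), Fin n → Y i) :
    Fin n → (∀ i : Fin (k + 1), Y i) :=
  fun t i => ys i t

/-- The acceptance region `A_k` of the decision center `R_k`: the tuples on which the
guess is `Ĥ_k = 0` (decision `false`). -/
def acceptSet (n : ℕ) (φ : ∀ ℓ : ℕ, (Fin n → Y ℓ) → ℕ → ℕ)
    (g : (Fin n → Y k) → ℕ → Bool) : Set (∀ i : Fin (k + 1), Fin n → Y i) :=
  {ys | g (extendTup k Y n ys k) (msgRec Y n φ (extendTup k Y n ys) (k - 1)) = false}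

/-- The set `D_k`: the acceptance region intersected with the strongly typical set. -/
def DsetCM (n : ℕ) (φ : ∀ ℓ : ℕ, (Fin n → Y ℓ) → ℕ → ℕ)
    (g : (Fin n → Y k) → ℕ → Bool) : Set (∀ i : Fin (k + 1), Fin n → Y i) :=
  acceptSet k Y n φ g ∩ {ys | tupleSeq k Y ys ∈ typicalSet P (μseq n) n}

/-- `Δ_k = Pr[(Y₀ⁿ,…,Y_kⁿ) ∈ D_k]` under `H = 0`. -/
def DeltaCM (n : ℕ) (φ : ∀ ℓ : ℕ, (Fin n → Y ℓ) → ℕ → ℕ)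
    (g : (Fin n → Y k) → ℕ → Bool) : ℝ :=
  probSet (iidK k Y P n) (DsetCM k Y P n φ g)

open Classical in
/-- The change-of-measure pmf of `(Ỹ₀ⁿ,…,Ỹ_kⁿ)`: the `H = 0` law conditioned on `D_k`. -/
def ptildeCM (n : ℕ) (φ : ∀ ℓ : ℕ, (Fin n → Y ℓ) → ℕ → ℕ)
    (g : (Fin n → Y k) → ℕ → Bool) (ys : ∀ i : Fin (k + 1), Fin n → Y i) : ℝ :=
  if ys ∈ DsetCM k Y P n φ g then iidK k Y P n ys / DeltaCM k Y P n φ g else 0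

/-- The pmf of `((Ỹ₀ⁿ,…,Ỹ_kⁿ), T)` with `T` uniform on `{1,…,n}` independent of the rest. -/
def pfullCM (n : ℕ) (φ : ∀ ℓ : ℕ, (Fin n → Y ℓ) → ℕ → ℕ)
    (g : (Fin n → Y k) → ℕ → Bool)
    (ω : (∀ i : Fin (k + 1), Fin n → Y i) × Fin n) : ℝ :=
  ptildeCM k Y P n φ g ω.1 / n

/-- The random variable `M̃_{j+1}` (the message of hop `j+1` applied to the tilde sources). -/
def MtilRV (n : ℕ) (φ : ∀ ℓ : ℕ, (Fin n → Y ℓ) → ℕ → ℕ) (j : ℕ)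
    (ω : (∀ i : Fin (k + 1), Fin n → Y i) × Fin n) : ℕ :=
  msgRec Y n φ (extendTup k Y n ω.1) j

open Classical in
/-- The prefixes `(Ỹ₀^{T−1},…,Ỹ_k^{T−1})` as a random variable. -/
def prefixAll (n : ℕ) (ω : (∀ i : Fin (k + 1), Fin n → Y i) × Fin n) :
    ∀ i : Fin (k + 1), Fin n → Option (Y i) :=
  fun i t => if (t : ℕ) < (ω.2 : ℕ) then some (ω.1 i t) else none

/-- The auxiliary random variable `U_{j+1} := (M̃_{j+1}, Ỹ₀^{T−1},…,Ỹ_k^{T−1}, T)`. -/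
def UvarCM (n : ℕ) (φ : ∀ ℓ : ℕ, (Fin n → Y ℓ) → ℕ → ℕ) (j : ℕ)
    (ω : (∀ i : Fin (k + 1), Fin n → Y i) × Fin n) :
    ℕ × (∀ i : Fin (k + 1), Fin n → Option (Y i)) × Fin n :=
  (MtilRV k Y n φ j ω, prefixAll k Y n ω, ω.2)

/-- The type-I error probability `α_{k,n} = Pr[Ĥ_k = 1 | H = 0]`. -/
def alphaCM (n : ℕ) (φ : ∀ ℓ : ℕ, (Fin n → Y ℓ) → ℕ → ℕ)
    (g : (Fin n → Y k) → ℕ → Bool) : ℝ :=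
  probSet (iidK k Y P n) ((acceptSet k Y n φ g)ᶜ)

/-- The type-II error probability `β_{k,n} = Pr[Ĥ_k = 0 | H = 1]`. -/
def betaCM (n : ℕ) (φ : ∀ ℓ : ℕ, (Fin n → Y ℓ) → ℕ → ℕ)
    (g : (Fin n → Y k) → ℕ → Bool) : ℝ :=
  probSet (iidQK k Y P n) (acceptSet k Y n φ g)

end KHop

section Helpers

open Classical in
theorem aux_probEq_nonneg {Ω α : Type*} [Fintype Ω] (p : Ω → ℝ) (hp : ∀ ω, 0 ≤ p ω)
    (X : Ω → α) (a : α) : 0 ≤ probEq p X a := by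
  unfold probEq
  refine Finset.sum_nonneg fun ω _ => ?_
  split_ifs
  · exact hp ω
  · exact le_rfl

open Classical in
theorem aux_le_probEq {Ω α : Type*} [Fintype Ω] (p : Ω → ℝ) (hp : ∀ ω, 0 ≤ p ω)
    (X : Ω → α) (ω : Ω) : p ω ≤ probEq p X (X ω) := by
  unfold probEq
  have := Finset.single_le_sum (f := fun ω' => if X ω' = X ω then p ω' else 0) (s := Finset.univ)
    (fun ω' _ => by
      show 0 ≤ if X ω' = X ω then p ω' else 0
      split_ifs
      · exact hp ω'
      · exact le_rfl) (Finset.mem_univ ω)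
  simpa using this

theorem aux_probEq_congr {Ω α β : Type*} [Fintype Ω] (p : Ω → ℝ) (X : Ω → α) (X' : Ω → β)
    (h : ∀ ω ω', X ω = X ω' ↔ X' ω = X' ω') (ω : Ω) :
    probEq p X (X ω) = probEq p X' (X' ω) := by
  unfold probEq
  refine Finset.sum_congr rfl fun ω' _ => ?_
  by_cases hh : X ω' = X ω
  · rw [if_pos hh, if_pos ((h _ _).1 hh)]
  · rw [if_neg hh, if_neg (fun h' => hh ((h _ _).2 h'))]

theorem aux_ent_congr {Ω α β : Type*} [Fintype Ω] (p : Ω → ℝ) (X : Ω → α) (X' : Ω → β)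
    (h : ∀ ω ω', X ω = X ω' ↔ X' ω = X' ω') : entOf p X = entOf p X' := by
  unfold entOf
  congr 1
  refine Finset.sum_congr rfl fun ω _ => ?_
  rw [aux_probEq_congr p X X' h ω]

open Classical in
theorem aux_sum_image {Ω α : Type*} [Fintype Ω] (p : Ω → ℝ) (X : Ω → α) (h : α → ℝ) :
    ∑ ω, p ω * h (X ω) = ∑ b ∈ Finset.univ.image X, probEq p X b * h b := by
  rw [← Finset.sum_fiberwise_of_maps_to (s := Finset.univ) (t := Finset.univ.image X) (g := X)
    (fun ω _ => Finset.mem_image_of_mem X (Finset.mem_univ ω))]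
  refine Finset.sum_congr rfl fun b _ => ?_
  unfold probEq
  rw [Finset.sum_filter, Finset.sum_mul]
  refine Finset.sum_congr rfl fun ω _ => ?_
  split_ifs with hb
  · rw [hb]
  · simp

open Classical in
theorem aux_gibbs {Ω β γ : Type*} [Fintype Ω] (p : Ω → ℝ) (hp : ∀ ω, 0 ≤ p ω)
    (Y : Ω → β) (f : β → γ) (Q : β → ℝ)
    (hpos : ∀ ω, 0 < p ω → 0 < Q (Y ω))
    (hQ : ∀ (s : Finset β) (c : γ), (∀ b ∈ s, f b = c) → ∑ b ∈ s, Q b ≤ 1) :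
    entOf p Y - entOf p (fun ω => f (Y ω)) ≤ -∑ ω, p ω * Real.logb 2 (Q (Y ω)) := by
  have hl2 : 0 < Real.log 2 := Real.log_pos one_lt_two
  have key : ∑ ω, p ω * (Q (Y ω) * probEq p (fun ω => f (Y ω)) (f (Y ω)) / probEq p Y (Y ω))
      ≤ ∑ ω, p ω := by
    rw [aux_sum_image p Y (fun b => Q b * probEq p (fun ω => f (Y ω)) (f b) / probEq p Y b)]
    have h1 : ∑ ω, p ω = ∑ c ∈ (Finset.univ.image Y).image f, probEq p (fun ω => f (Y ω)) c := by
      have := aux_sum_image p (fun ω => f (Y ω)) (fun _ => 1)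
      simp only [mul_one] at this
      rw [this, Finset.image_image]
      rfl
    rw [h1, ← Finset.sum_fiberwise_of_maps_to (s := Finset.univ.image Y)
      (t := (Finset.univ.image Y).image f) (g := f)
      (fun ω h => Finset.mem_image_of_mem f h)]
    refine Finset.sum_le_sum fun c _ => ?_
    have hc := aux_probEq_nonneg p hp (fun ω => f (Y ω)) c
    by_cases hc0 : probEq p (fun ω => f (Y ω)) c = 0
    · rw [hc0]
      refine le_of_eq (Finset.sum_eq_zero fun b hb => ?_)
      rw [(Finset.mem_filter.1 hb).2, hc0]; simp
    calc _ ≤ ∑ b ∈ (Finset.univ.image Y).filter (fun b => f b = c ∧ probEq p Y b ≠ 0),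
          Q b * probEq p (fun ω => f (Y ω)) c := by
          rw [← Finset.filter_filter, Finset.sum_filter (p := fun b => probEq p Y b ≠ 0)]
          refine le_of_eq (Finset.sum_congr rfl fun b hb => ?_)
          rw [(Finset.mem_filter.1 hb).2]
          split_ifs with h
          · field_simp
          · rw [not_not.1 h]; simp
      _ = (∑ b ∈ (Finset.univ.image Y).filter (fun b => f b = c ∧ probEq p Y b ≠ 0), Q b)
            * probEq p (fun ω => f (Y ω)) c := by rw [Finset.sum_mul]
      _ ≤ 1 * probEq p (fun ω => f (Y ω)) c := by
          refine mul_le_mul_of_nonneg_right (hQ _ c ?_) hc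
          intro b hb
          exact (Finset.mem_filter.1 hb).2.1
      _ = _ := one_mul _
  have h2 : ∑ ω, p ω * (Real.logb 2 (Q (Y ω)) + Real.logb 2 (probEq p (fun ω => f (Y ω)) (f (Y ω)))
      - Real.logb 2 (probEq p Y (Y ω))) ≤ 0 := by
    calc _ ≤ ∑ ω, (p ω * (Q (Y ω) * probEq p (fun ω => f (Y ω)) (f (Y ω)) / probEq p Y (Y ω))
            - p ω) / Real.log 2 := by
          refine Finset.sum_le_sum fun ω _ => ?_
          rcases (hp ω).eq_or_lt with h0 | h0
          · rw [← h0]; simp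
          have hq := hpos ω h0
          have ha := h0.trans_le (aux_le_probEq p hp Y ω)
          have hb := h0.trans_le (aux_le_probEq p hp (fun ω => f (Y ω)) ω)
          rw [← Real.logb_mul hq.ne' hb.ne', ← Real.logb_div (mul_pos hq hb).ne' ha.ne', Real.logb,
            ← mul_div_assoc]
          refine div_le_div_of_nonneg_right ?_ hl2.le
          have := Real.log_le_sub_one_of_pos (div_pos (mul_pos hq hb) ha)
          nlinarith
      _ = (∑ ω, p ω * (Q (Y ω) * probEq p (fun ω => f (Y ω)) (f (Y ω)) / probEq p Y (Y ω))
            - ∑ ω, p ω) / Real.log 2 := by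
          rw [← Finset.sum_div, Finset.sum_sub_distrib]
      _ ≤ 0 := div_nonpos_of_nonpos_of_nonneg (by linarith) hl2.le
  simp only [mul_sub, mul_add, Finset.sum_sub_distrib, Finset.sum_add_distrib] at h2
  unfold entOf
  linarith

open Classical in
theorem aux_sum_probEq_pair {Ω α γ : Type*} [Fintype Ω] [Fintype α] (p : Ω → ℝ)
    (X : Ω → α) (W : Ω → γ) (c : γ) :
    ∑ x, probEq p (fun ω => (X ω, W ω)) (x, c) = probEq p W c := by
  unfold probEq
  rw [Finset.sum_comm]
  refine Finset.sum_congr rfl fun ω _ => ?_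
  by_cases h : W ω = c <;> simp [h]

open Classical in
theorem aux_sum_pair_le {Ω α γ β : Type*} [Fintype Ω] [Fintype α] (p : Ω → ℝ) (hp : ∀ ω, 0 ≤ p ω)
    (X : Ω → α) (W : Ω → γ) (c : γ) (b : β) (s : Finset (α × β)) (hs : ∀ y ∈ s, y.2 = b) :
    ∑ y ∈ s, probEq p (fun ω => (X ω, W ω)) (y.1, c) / probEq p W c ≤ 1 := by
  rw [← Finset.sum_div]
  refine div_le_one_of_le₀ ?_ (aux_probEq_nonneg p hp _ _)
  rw [← aux_sum_probEq_pair p X W c]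
  have hinj : Set.InjOn (Prod.fst : α × β → α) (s : Set (α × β)) := by
    intro y hy y' hy' h
    exact Prod.ext h ((hs y hy).trans (hs y' hy').symm)
  rw [← Finset.sum_image (s := s) (g := Prod.fst)
    (f := fun x => probEq p (fun ω => (X ω, W ω)) (x, c)) hinj]
  exact Finset.sum_le_sum_of_subset_of_nonneg (Finset.subset_univ _)
    fun x _ _ => aux_probEq_nonneg p hp _ _

theorem aux_condmono {Ω α β γ : Type*} [Fintype Ω] [Fintype α] (p : Ω → ℝ) (hp : ∀ ω, 0 ≤ p ω)
    (X : Ω → α) (S : Ω → β) (W : Ω → γ) (h : ∀ ω ω', S ω = S ω' → W ω = W ω') :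
    entOf p (fun ω => (X ω, S ω)) - entOf p S ≤ entOf p (fun ω => (X ω, W ω)) - entOf p W := by
  rcases isEmpty_or_nonempty Ω with hΩ | hΩ
  · simp [entOf]
  have : Nonempty γ := hΩ.map W
  obtain ⟨e, he⟩ := (Function.factorsThrough_iff (f := S) W).1 (fun ω ω' hh => h ω ω' hh)
  have he' : ∀ ω, W ω = e (S ω) := fun ω => congrFun he ω
  have := aux_gibbs p hp (fun ω => (X ω, S ω)) (Prod.snd : α × β → β)
    (fun y => probEq p (fun ω => (X ω, W ω)) (y.1, e y.2) / probEq p W (e y.2))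
    (by
      intro ω hω
      simp only [← he']
      exact div_pos (hω.trans_le (aux_le_probEq p hp (fun ω => (X ω, W ω)) ω))
        (hω.trans_le (aux_le_probEq p hp W ω)))
    (by
      intro s c hs
      calc _ = ∑ y ∈ s, probEq p (fun ω => (X ω, W ω)) (y.1, e c) / probEq p W (e c) := by
            refine Finset.sum_congr rfl fun y hy => by rw [hs y hy]
        _ ≤ 1 := aux_sum_pair_le p hp X W (e c) c s hs)
  refine this.trans (le_of_eq ?_)
  unfold entOf
  have hh : ∀ ω, p ω * Real.logb 2 (probEq p (fun ω => (X ω, W ω)) (X ω, e (S ω))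
        / probEq p W (e (S ω)))
      = p ω * Real.logb 2 (probEq p (fun ω => (X ω, W ω)) (X ω, W ω))
        - p ω * Real.logb 2 (probEq p W (W ω)) := by
    intro ω
    rw [← he']
    rcases (hp ω).eq_or_lt with h0 | h0
    · rw [← h0]; simp
    rw [Real.logb_div (h0.trans_le (aux_le_probEq p hp (fun ω => (X ω, W ω)) ω)).ne'
      (h0.trans_le (aux_le_probEq p hp W ω)).ne']
    ring
  simp only [hh, Finset.sum_sub_distrib]
  ring

theorem aux_entT {Ω β : Type*} [Fintype Ω] {n : ℕ} (hn : 0 < n) (r : Ω → ℝ) (hr : ∀ ω, 0 ≤ r ω)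
    (hr1 : ∑ ω, r ω = 1) (F : Ω × Fin n → β) (hF : ∀ ω ω', F ω = F ω' → ω.2 = ω'.2) :
    entOf (fun ω : Ω × Fin n => r ω.1 / n) F
      = Real.logb 2 n + (1 / n) * ∑ t, entOf r (fun ω => F (ω, t)) := by
  classical
  have hn' : (n : ℝ) ≠ 0 := by positivity
  have hpr : ∀ ω t, probEq (fun ω : Ω × Fin n => r ω.1 / n) F (F (ω, t))
      = probEq r (fun ω => F (ω, t)) (F (ω, t)) / n := by
    intro ω t
    unfold probEq
    rw [Fintype.sum_prod_type, Finset.sum_div]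
    refine Finset.sum_congr rfl fun ω' _ => ?_
    rw [Finset.sum_eq_single t]
    · split_ifs <;> simp
    · intro t' _ ht'
      rw [if_neg]
      intro h
      exact ht' (hF _ _ h)
    · simp
  unfold entOf
  rw [Fintype.sum_prod_type]
  have : ∀ ω t, r ω / n * Real.logb 2 (probEq (fun ω : Ω × Fin n => r ω.1 / n) F (F (ω, t)))
      = (1 / n) * (r ω * Real.logb 2 (probEq r (fun ω => F (ω, t)) (F (ω, t))))
        - (1 / n) * Real.logb 2 n * r ω := by
    intro ω t
    rw [hpr]
    rcases (hr ω).eq_or_lt with h0 | h0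
    · rw [← h0]; simp
    have := h0.trans_le (aux_le_probEq r hr (fun ω => F (ω, t)) ω)
    rw [Real.logb_div this.ne' hn']
    ring
  simp only [this]
  rw [Finset.sum_comm]
  simp only [Finset.sum_sub_distrib, ← Finset.mul_sum, hr1, Finset.sum_neg_distrib]
  simp
  field_simp
  ring

end Helpers

section Generic

theorem aux_condMI_eq {Ω α β γ : Type*} [Fintype Ω] (p : Ω → ℝ) (X : Ω → α) (U : Ω → β)
    (Z : Ω → γ) : condMIOf p X U Z
      = (entOf p (fun ω => (X ω, Z ω)) - entOf p Z)
        - (entOf p (fun ω => (X ω, (U ω, Z ω))) - entOf p (fun ω => (U ω, Z ω))) := by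
  unfold condMIOf condEntOf
  rw [aux_ent_congr p (fun ω => ((X ω, U ω), Z ω)) (fun ω => (X ω, (U ω, Z ω)))
    (by intro ω ω'; simp [and_assoc])]
  ring

theorem aux_condMI_symm {Ω α β γ : Type*} [Fintype Ω] (p : Ω → ℝ) (X : Ω → α) (U : Ω → β)
    (Z : Ω → γ) : condMIOf p X U Z = condMIOf p U X Z := by
  unfold condMIOf condEntOf
  rw [aux_ent_congr p (fun ω => ((X ω, U ω), Z ω)) (fun ω => ((U ω, X ω), Z ω))
    (by intro ω ω'; simp only [Prod.mk.injEq]; tauto)]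
  ring

theorem aux_condMI_nonneg {Ω α β γ : Type*} [Fintype Ω] [Fintype α] (p : Ω → ℝ)
    (hp : ∀ ω, 0 ≤ p ω) (X : Ω → α) (U : Ω → β) (Z : Ω → γ) : 0 ≤ condMIOf p X U Z := by
  rw [aux_condMI_eq]
  have := aux_condmono p hp X (fun ω => (U ω, Z ω)) Z (by
    intro ω ω' h
    exact (Prod.mk.inj h).2)
  linarith

/-- History variable: the whole `a`-sequence and the first `m` letters. -/
def auxV {Ω 𝒴 𝒜 : Type*} {n : ℕ} (w : Ω → Fin n → 𝒴) (a : 𝒴 → 𝒜) (m : ℕ) (ω : Ω) :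
    (Fin n → 𝒜) × (Fin n → Option 𝒴) :=
  (fun t => a (w ω t), fun t => if (t : ℕ) < m then some (w ω t) else none)

theorem auxV_eq_iff {Ω 𝒴 𝒜 : Type*} {n : ℕ} (w : Ω → Fin n → 𝒴) (a : 𝒴 → 𝒜) (m : ℕ)
    (ω ω' : Ω) : auxV w a m ω = auxV w a m ω' ↔
      (∀ t, a (w ω t) = a (w ω' t)) ∧ ∀ t : Fin n, (t : ℕ) < m → w ω t = w ω' t := by
  unfold auxV
  rw [Prod.mk.injEq, funext_iff, funext_iff]
  refine and_congr Iff.rfl (forall_congr' fun t => ?_)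
  by_cases h : (t : ℕ) < m <;> simp [h]

theorem aux_telescope {Ω 𝒴 𝒜 : Type*} [Fintype Ω] {n : ℕ} (r : Ω → ℝ) (w : Ω → Fin n → 𝒴)
    (hw : Function.Injective w) (a : 𝒴 → 𝒜) :
    ∑ t : Fin n, (entOf r (fun ω => (w ω t, auxV w a t ω)) - entOf r (auxV w a (t : ℕ)))
      = entOf r (fun ω => ω) - entOf r (fun ω t => a (w ω t)) := by
  have h1 : ∀ t : Fin n, entOf r (fun ω => (w ω t, auxV w a t ω))
      = entOf r (auxV w a ((t : ℕ) + 1)) := by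
    intro t
    apply aux_ent_congr
    intro ω ω'
    rw [Prod.mk.injEq, auxV_eq_iff, auxV_eq_iff]
    constructor
    · rintro ⟨h0, h1, h2⟩
      refine ⟨h1, fun s hs => ?_⟩
      rcases Nat.lt_succ_iff_lt_or_eq.1 hs with h | h
      · exact h2 s h
      · rw [Fin.ext h]; exact h0
    · rintro ⟨h1, h2⟩
      exact ⟨h2 t (Nat.lt_succ_self _), h1, fun s hs => h2 s (by omega)⟩
  simp only [h1]
  rw [Fin.sum_univ_eq_sum_range
    (fun m => entOf r (auxV w a (m + 1)) - entOf r (auxV w a m)) n,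
    Finset.sum_range_sub (fun m => entOf r (auxV w a m)) n]
  congr 1
  · apply aux_ent_congr
    intro ω ω'
    rw [auxV_eq_iff]
    constructor
    · rintro ⟨_, h⟩
      exact hw (funext fun t => h t t.isLt)
    · rintro rfl
      simp
  · apply aux_ent_congr
    intro ω ω'
    rw [auxV_eq_iff, funext_iff]
    simp

open Classical in
theorem aux_sum_fiber_le {𝒴 𝒞 : Type*} [Fintype 𝒴] (P : 𝒴 → ℝ) (hP : ∀ y, 0 ≤ P y) (f : 𝒴 → 𝒞)
    (s : Finset 𝒴) (c : 𝒞) (hs : ∀ y ∈ s, f y = c) : ∑ y ∈ s, P y / probEq P f (f y) ≤ 1 := by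
  have : ∑ y ∈ s, P y / probEq P f (f y) = (∑ y ∈ s, P y) / probEq P f c := by
    rw [Finset.sum_div]
    exact Finset.sum_congr rfl fun y hy => by rw [hs y hy]
  rw [this]
  refine div_le_one_of_le₀ ?_ (aux_probEq_nonneg P hP _ _)
  unfold probEq
  rw [← Finset.sum_filter]
  refine Finset.sum_le_sum_of_subset_of_nonneg ?_ fun y _ _ => hP y
  intro y hy
  simp [hs y hy]

theorem aux_sum_probEq {Ω α : Type*} [Fintype Ω] [Fintype α] (p : Ω → ℝ) (X : Ω → α) :
    ∑ x, probEq p X x = ∑ ω, p ω := by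
  classical
  unfold probEq
  rw [Finset.sum_comm]
  exact Finset.sum_congr rfl fun ω _ => by simp

theorem aux_generic {Ω 𝒴 𝒜 𝒳 𝒵 𝒰 : Type*} [Fintype Ω] [Fintype 𝒴] [Fintype 𝒜] [Fintype 𝒳]
    {n : ℕ} (hn : 0 < n) (P : 𝒴 → ℝ) (hP : IsPMF P) (r : Ω → ℝ) (hr : IsPMF r)
    (w : Ω → Fin n → 𝒴) (hw : Function.Injective w) (Δ : ℝ) (hΔ : 0 < Δ)
    (hrP : ∀ ω, r ω ≠ 0 → r ω = (∏ t, P (w ω t)) / Δ)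
    (a : 𝒴 → 𝒜) (x : 𝒴 → 𝒳) (z : 𝒴 → 𝒵) (hza : ∀ y y', a y = a y' → z y = z y')
    (hM : ∀ y, 0 < P y → probEq P (fun y => (x y, a y)) (x y, a y) * probEq P z (z y)
      = probEq P (fun y => (x y, z y)) (x y, z y) * probEq P a (a y))
    (U : Ω × Fin n → 𝒰)
    (hU : ∀ ω ω' : Ω × Fin n, ω.2 = ω'.2 → (∀ t, a (w ω.1 t) = a (w ω'.1 t)) →
      (∀ t : Fin n, (t : ℕ) < ω.2 → w ω.1 t = w ω'.1 t) → U ω = U ω') :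
    condMIOf (fun ω : Ω × Fin n => r ω.1 / n) (fun ω => x (w ω.1 ω.2)) U
      (fun ω => z (w ω.1 ω.2)) ≤ -(1 / n) * Real.logb 2 Δ := by
  classical
  have hn' : (0 : ℝ) < n := by exact_mod_cast hn
  set p : Ω × Fin n → ℝ := fun ω => r ω.1 / n with hpdef
  have hp : ∀ ω, 0 ≤ p ω := fun ω => div_nonneg (hr.1 _) hn'.le
  have hPpos : ∀ ω, 0 < r ω → ∀ t, 0 < P (w ω t) := by
    intro ω hω t
    refine (hP.1 _).lt_of_ne' fun h0 => ?_
    have := hrP ω hω.ne'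
    rw [Finset.prod_eq_zero (Finset.mem_univ t) h0] at this
    simp at this
    exact hω.ne' this
  have hPpos' : ∀ ω, 0 < p ω → 0 < P (w ω.1 ω.2) := by
    intro ω hω
    refine hPpos ω.1 ((hr.1 _).lt_of_ne' fun h0 => ?_) ω.2
    simp [hpdef, h0] at hω
  set S : Ω × Fin n → ((Fin n → 𝒜) × (Fin n → Option 𝒴)) × Fin n :=
    fun ω => (auxV w a (ω.2 : ℕ) ω.1, ω.2) with hS
  set Yt : Ω × Fin n → 𝒴 := fun ω => w ω.1 ω.2 with hYt
  have hSiff : ∀ ω ω', S ω = S ω' → ω.2 = ω'.2 ∧ (∀ t, a (w ω.1 t) = a (w ω'.1 t)) ∧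
      ∀ t : Fin n, (t : ℕ) < ω.2 → w ω.1 t = w ω'.1 t := by
    rintro ⟨ω, t⟩ ⟨ω', t'⟩ h
    obtain ⟨h1, h2⟩ := Prod.mk.inj h
    simp only at h1 h2
    subst h2
    exact ⟨rfl, (auxV_eq_iff w a _ ω ω').1 h1⟩
  have hSA : ∀ ω ω', S ω = S ω' → a (Yt ω) = a (Yt ω') := by
    intro ω ω' h
    obtain ⟨h1, h2, _⟩ := hSiff ω ω' h
    simp only [hYt]
    rw [← h1]
    exact h2 ω.2
  have e2 := aux_condmono p hp (fun ω => x (Yt ω)) S (fun ω => (U ω, z (Yt ω))) (by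
    intro ω ω' h
    obtain ⟨h1, h2, h3⟩ := hSiff ω ω' h
    exact Prod.ext (hU ω ω' h1 h2 h3) (hza _ _ (hSA ω ω' h)))
  have e3 := aux_condmono p hp Yt (fun ω => (x (Yt ω), S ω)) (fun ω => (x (Yt ω), a (Yt ω))) (by
    intro ω ω' h
    obtain ⟨h1, h2⟩ := Prod.mk.inj h
    exact Prod.ext h1 (hSA ω ω' h2))
  rw [aux_ent_congr p (fun ω => (Yt ω, (x (Yt ω), S ω))) (fun ω => (Yt ω, S ω)) (by
      intro ω ω'
      simp only [Prod.mk.injEq]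
      constructor
      · rintro ⟨h1, _, h2⟩; exact ⟨h1, h2⟩
      · rintro ⟨h1, h2⟩; exact ⟨h1, by rw [h1], h2⟩),
    aux_ent_congr p (fun ω => (Yt ω, (x (Yt ω), a (Yt ω)))) Yt (by
      intro ω ω'
      simp only [Prod.mk.injEq]
      constructor
      · rintro ⟨h1, _⟩; exact h1
      · intro h1; exact ⟨h1, by rw [h1], by rw [h1]⟩)] at e3
  have e4 : entOf p (fun ω => (Yt ω, S ω)) - entOf p S
      = (1 / n) * (entOf r (fun ω => ω) - entOf r (fun ω t => a (w ω t))) := by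
    rw [← aux_telescope r w hw a, hpdef, aux_entT hn r hr.1 hr.2 _ (by
        intro ω ω' h
        exact (hSiff ω ω' (Prod.mk.inj h).2).1),
      aux_entT hn r hr.1 hr.2 S (fun ω ω' h => (hSiff ω ω' h).1), Finset.sum_sub_distrib]
    have c1 : ∀ t : Fin n, entOf r (fun ω => (Yt (ω, t), S (ω, t)))
        = entOf r (fun ω => (w ω t, auxV w a t ω)) := by
      intro t
      apply aux_ent_congr
      intro ω ω'
      simp [hYt, hS]
    have c2 : ∀ t : Fin n, entOf r (fun ω => S (ω, t)) = entOf r (auxV w a (t : ℕ)) := by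
      intro t
      apply aux_ent_congr
      intro ω ω'
      simp [hS]
    simp only [c1, c2]
    ring
  have e5 : entOf r (fun ω => ω)
      = Real.logb 2 Δ - ∑ ω, r ω * ∑ t, Real.logb 2 (P (w ω t)) := by
    have h1 : ∀ ω, r ω * Real.logb 2 (probEq r (fun ω => ω) ω)
        = r ω * (∑ t, Real.logb 2 (P (w ω t))) - r ω * Real.logb 2 Δ := by
      intro ω
      rcases (hr.1 ω).eq_or_lt with h0 | h0
      · rw [← h0]; simp
      have : probEq r (fun ω => ω) ω = r ω := by simp [probEq]
      rw [this]
      nth_rewrite 2 [hrP ω h0.ne']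
      rw [Real.logb_div (Finset.prod_pos fun t _ => hPpos ω h0 t).ne' hΔ.ne', Real.logb_prod]
      · ring
      · intro t _
        exact (hPpos ω h0 t).ne'
    unfold entOf
    simp only [h1, Finset.sum_sub_distrib, ← Finset.sum_mul, hr.2]
    ring
  have e6 : entOf r (fun ω t => a (w ω t))
      ≤ -∑ ω, r ω * ∑ t, Real.logb 2 (probEq P a (a (w ω t))) := by
    have hpa : ∀ ω, 0 < r ω → ∀ t, 0 < probEq P a (a (w ω t)) := fun ω hω t =>
      (hPpos ω hω t).trans_le (aux_le_probEq P hP.1 a _)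
    have h := aux_gibbs r hr.1 (fun ω t => a (w ω t)) (fun _ => ())
      (fun v : Fin n → 𝒜 => ∏ t, probEq P a (v t))
      (fun ω hω => Finset.prod_pos fun t _ => hpa ω hω t)
      (by
        intro s _ _
        calc ∑ v ∈ s, ∏ t, probEq P a (v t) ≤ ∑ v : Fin n → 𝒜, ∏ t, probEq P a (v t) :=
              Finset.sum_le_sum_of_subset_of_nonneg (Finset.subset_univ _) fun v _ _ =>
                Finset.prod_nonneg fun t _ => aux_probEq_nonneg P hP.1 a _
          _ = ∏ _t : Fin n, ∑ c, probEq P a c := by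
              rw [Finset.prod_univ_sum, Fintype.piFinset_univ]
          _ = 1 := by simp [aux_sum_probEq, hP.2]
          _ ≤ 1 := le_rfl)
    have h0 : entOf r (fun _ : Ω => ()) = 0 := by
      simp [entOf, probEq, hr.2]
    rw [h0, sub_zero] at h
    refine h.trans (le_of_eq ?_)
    congr 1
    refine Finset.sum_congr rfl fun ω _ => ?_
    rcases (hr.1 ω).eq_or_lt with h0 | h0
    · rw [← h0]; simp
    rw [Real.logb_prod]
    intro t _
    exact (hpa ω h0 t).ne'
  have hE : ∀ F : 𝒴 → ℝ, ∑ ω, p ω * F (Yt ω) = (1 / n) * ∑ ω, r ω * ∑ t, F (w ω t) := by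
    intro F
    rw [Fintype.sum_prod_type, Finset.mul_sum]
    refine Finset.sum_congr rfl fun ω _ => ?_
    rw [Finset.mul_sum, Finset.mul_sum]
    refine Finset.sum_congr rfl fun t _ => ?_
    simp only [hpdef, hYt]
    ring
  have e7 := aux_gibbs p hp Yt (fun y => (x y, a y))
    (fun y => P y / probEq P (fun y => (x y, a y)) (x y, a y))
    (fun ω hω => div_pos (hPpos' ω hω)
      ((hPpos' ω hω).trans_le (aux_le_probEq P hP.1 (fun y => (x y, a y)) _)))
    (fun s c hs => aux_sum_fiber_le P hP.1 (fun y => (x y, a y)) s c hs)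
  have e8 := aux_gibbs p hp (fun ω => (x (Yt ω), z (Yt ω))) (Prod.snd : 𝒳 × 𝒵 → 𝒵)
    (fun y => probEq P (fun y => (x y, z y)) y / probEq P z y.2)
    (fun ω hω => div_pos
      ((hPpos' ω hω).trans_le (aux_le_probEq P hP.1 (fun y => (x y, z y)) _))
      ((hPpos' ω hω).trans_le (aux_le_probEq P hP.1 z _)))
    (fun s c hs => by
      calc _ = ∑ y ∈ s, probEq P (fun y => (x y, z y)) (y.1, c) / probEq P z c := by
            refine Finset.sum_congr rfl fun y hy => ?_
            rw [← hs y hy]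
        _ ≤ 1 := aux_sum_pair_le P hP.1 x z c c s hs)
  have e9 : ∑ ω, p ω * Real.logb 2 (probEq P (fun y => (x y, z y)) (x (Yt ω), z (Yt ω))
          / probEq P z (z (Yt ω)))
      = ∑ ω, p ω * Real.logb 2 (P (Yt ω)) - ∑ ω, p ω * Real.logb 2 (probEq P a (a (Yt ω)))
        - ∑ ω, p ω * Real.logb 2 (P (Yt ω)
          / probEq P (fun y => (x y, a y)) (x (Yt ω), a (Yt ω))) := by
    rw [← Finset.sum_sub_distrib, ← Finset.sum_sub_distrib]
    refine Finset.sum_congr rfl fun ω _ => ?_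
    rcases (hp ω).eq_or_lt with h0 | h0
    · rw [← h0]; simp
    have q0 := hPpos' ω h0
    have q1 := q0.trans_le (aux_le_probEq P hP.1 (fun y => (x y, z y)) _)
    have q2 := q0.trans_le (aux_le_probEq P hP.1 z _)
    have q3 := q0.trans_le (aux_le_probEq P hP.1 a _)
    have q4 := q0.trans_le (aux_le_probEq P hP.1 (fun y => (x y, a y)) _)
    have hm := congrArg (Real.logb 2) (hM _ q0)
    rw [Real.logb_mul q4.ne' q2.ne', Real.logb_mul q1.ne' q3.ne'] at hm
    simp only [hYt]
    rw [Real.logb_div q1.ne' q2.ne', Real.logb_div q0.ne' q4.ne', ← mul_sub, ← mul_sub]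
    congr 1
    linarith
  rw [hE (fun y => Real.logb 2 (P y)), hE (fun y => Real.logb 2 (probEq P a (a y)))] at e9
  rw [aux_condMI_eq]
  have e6' := mul_le_mul_of_nonneg_left e6 (one_div_pos.2 hn').le
  rw [e5] at e4
  simp only [hYt] at *
  nlinarith [e2, e3, e4, e6', e7, e8, e9]

end Generic

section MarkovAux

set_option linter.unusedSectionVars false

variable (k : ℕ) (Y : ℕ → Type) [∀ i, Fintype (Y i)] [∀ i, Nonempty (Y i)]
variable (P : (∀ i : Fin (k + 1), Y i) → ℝ)

open Classical in
theorem aux_P_eq_div (hP : IsPMF P) (hMC : IsMarkovChainK k Y P) (y : ∀ i : Fin (k + 1), Y i) :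
    P y = (∏ j : Fin k, pairMargK k Y P j (y (idxLo k j)) (y (idxHi k j))) /
      ∏ i ∈ Finset.univ.filter (fun i : Fin (k + 1) => 0 < (i : ℕ) ∧ (i : ℕ) < k),
        margK k Y P i (y i) := by
  by_cases h : ∏ i ∈ Finset.univ.filter (fun i : Fin (k + 1) => 0 < (i : ℕ) ∧ (i : ℕ) < k),
        margK k Y P i (y i) = 0
  · rw [h, div_zero]
    obtain ⟨i, _, hi⟩ := Finset.prod_eq_zero_iff.1 h
    have := aux_le_probEq P hP.1 (fun y => y i) y
    have h2 : probEq P (fun y => y i) (y i) = margK k Y P i (y i) := rfl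
    rw [h2, hi] at this
    exact le_antisymm this (hP.1 y)
  · rw [eq_div_iff h]
    exact hMC y

open Classical in
/-- lower factor -/
def auxF (j : Fin k) (y : ∀ i : Fin (k + 1), Y i) : ℝ :=
  (∏ l ∈ Finset.univ.filter (fun l : Fin k => (l : ℕ) < j),
      pairMargK k Y P l (y (idxLo k l)) (y (idxHi k l))) /
    ∏ i ∈ Finset.univ.filter (fun i : Fin (k + 1) => (0 < (i : ℕ) ∧ (i : ℕ) < k) ∧ (i : ℕ) ≤ j),
      margK k Y P i (y i)

open Classical in
/-- upper factor -/
def auxG (j : Fin k) (y : ∀ i : Fin (k + 1), Y i) : ℝ :=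
  (∏ l ∈ Finset.univ.filter (fun l : Fin k => ¬ (l : ℕ) < j),
      pairMargK k Y P l (y (idxLo k l)) (y (idxHi k l))) /
    ∏ i ∈ Finset.univ.filter (fun i : Fin (k + 1) => (0 < (i : ℕ) ∧ (i : ℕ) < k) ∧ ¬ (i : ℕ) ≤ j),
      margK k Y P i (y i)

theorem aux_P_eq_FG (hP : IsPMF P) (hMC : IsMarkovChainK k Y P) (j : Fin k)
    (y : ∀ i : Fin (k + 1), Y i) : P y = auxF k Y P j y * auxG k Y P j y := by
  classical
  rw [aux_P_eq_div k Y P hP hMC y]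
  unfold auxF auxG
  rw [div_mul_div_comm, Finset.prod_filter_mul_prod_filter_not,
    ← Finset.filter_filter (fun i : Fin (k + 1) => 0 < (i : ℕ) ∧ (i : ℕ) < k)
      (fun i => (i : ℕ) ≤ j),
    ← Finset.filter_filter (fun i : Fin (k + 1) => 0 < (i : ℕ) ∧ (i : ℕ) < k)
      (fun i => ¬ (i : ℕ) ≤ j),
    Finset.prod_filter_mul_prod_filter_not]

theorem auxF_congr (j : Fin k) (y y' : ∀ i : Fin (k + 1), Y i)
    (h : ∀ i : Fin (k + 1), (i : ℕ) ≤ j → y i = y' i) : auxF k Y P j y = auxF k Y P j y' := by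
  classical
  unfold auxF
  congr 1
  · refine Finset.prod_congr rfl fun l hl => ?_
    have hl' := (Finset.mem_filter.1 hl).2
    rw [h (idxLo k l) (by simp only [idxLo]; omega), h (idxHi k l) (by simp only [idxHi]; omega)]
  · refine Finset.prod_congr rfl fun i hi => ?_
    rw [h i (Finset.mem_filter.1 hi).2.2]

theorem auxG_congr (j : Fin k) (y y' : ∀ i : Fin (k + 1), Y i)
    (h : ∀ i : Fin (k + 1), (j : ℕ) ≤ i → y i = y' i) : auxG k Y P j y = auxG k Y P j y' := by
  classical
  unfold auxG
  congr 1
  · refine Finset.prod_congr rfl fun l hl => ?_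
    have hl' := (Finset.mem_filter.1 hl).2
    rw [h (idxLo k l) (by simp only [idxLo]; omega), h (idxHi k l) (by simp only [idxHi]; omega)]
  · refine Finset.prod_congr rfl fun i hi => ?_
    have := (Finset.mem_filter.1 hi).2.2
    rw [h i (by omega)]

/-- Splice: lower coordinates (`≤ j`) from `u`, upper ones from `v`. -/
def auxSplice (j : Fin k) (u v : ∀ i : Fin (k + 1), Y i) : ∀ i : Fin (k + 1), Y i :=
  fun i => if (i : ℕ) ≤ j then u i else v i

theorem auxSplice_lo (j : Fin k) (u v : ∀ i : Fin (k + 1), Y i) (i : Fin (k + 1))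
    (h : (i : ℕ) ≤ j) : auxSplice k Y j u v i = u i := if_pos h

theorem auxSplice_hi (j : Fin k) (u v : ∀ i : Fin (k + 1), Y i) (i : Fin (k + 1))
    (h : ¬ (i : ℕ) ≤ j) : auxSplice k Y j u v i = v i := if_neg h

theorem auxSplice_splice (j : Fin k) (u v : ∀ i : Fin (k + 1), Y i) :
    auxSplice k Y j (auxSplice k Y j u v) (auxSplice k Y j v u) = u := by
  funext i
  by_cases h : (i : ℕ) ≤ j <;> simp [auxSplice, h]

theorem aux_P_splice (hP : IsPMF P) (hMC : IsMarkovChainK k Y P) (j : Fin k)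
    (u v : ∀ i : Fin (k + 1), Y i) (h : u (idxLo k j) = v (idxLo k j)) :
    P (auxSplice k Y j u v) * P (auxSplice k Y j v u) = P u * P v := by
  have hF : ∀ u v, auxF k Y P j (auxSplice k Y j u v) = auxF k Y P j u := fun u v =>
    auxF_congr k Y P j _ _ fun i hi => auxSplice_lo k Y j u v i hi
  have hG : ∀ u v, u (idxLo k j) = v (idxLo k j) →
      auxG k Y P j (auxSplice k Y j u v) = auxG k Y P j v := by
    intro u v h
    refine auxG_congr k Y P j _ _ fun i hi => ?_
    by_cases hij : (i : ℕ) ≤ j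
    · have : i = idxLo k j := Fin.ext (le_antisymm hij hi)
      subst this
      rw [auxSplice_lo k Y j u v _ hij, h]
    · exact auxSplice_hi k Y j u v i hij
  simp only [aux_P_eq_FG k Y P hP hMC j, hF, hG u v h, hG v u h.symm]
  ring

theorem aux_markov (hP : IsPMF P) (hMC : IsMarkovChainK k Y P) (j : Fin k)
    (y : ∀ i : Fin (k + 1), Y i) :
    probEq P (fun y => (y (idxHi k j), fun i : {i : Fin (k + 1) // (i : ℕ) ≤ j} => y i.1))
        (y (idxHi k j), fun i : {i : Fin (k + 1) // (i : ℕ) ≤ j} => y i.1)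
      * probEq P (fun y => y (idxLo k j)) (y (idxLo k j))
    = probEq P (fun y => (y (idxHi k j), y (idxLo k j))) (y (idxHi k j), y (idxLo k j))
      * probEq P (fun y => fun i : {i : Fin (k + 1) // (i : ℕ) ≤ j} => y i.1)
        (fun i : {i : Fin (k + 1) // (i : ℕ) ≤ j} => y i.1) := by
  classical
  rw [mul_comm (probEq P (fun y => (y (idxHi k j), y (idxLo k j))) _)]
  unfold probEq
  rw [Finset.sum_mul_sum, Finset.sum_mul_sum, ← Finset.sum_product', ← Finset.sum_product']
  have hlo : ((idxLo k j : Fin (k + 1)) : ℕ) ≤ j := le_rfl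
  have hhi : ¬ ((idxHi k j : Fin (k + 1)) : ℕ) ≤ j := by simp only [idxHi]; omega
  have hres : ∀ u v : ∀ i : Fin (k + 1), Y i,
      (fun i : {i : Fin (k + 1) // (i : ℕ) ≤ j} => auxSplice k Y j u v i.1)
        = fun i : {i : Fin (k + 1) // (i : ℕ) ≤ j} => u i.1 := by
    intro u v
    funext i
    exact auxSplice_lo k Y j u v i.1 i.2
  refine Finset.sum_nbij' (fun q => (auxSplice k Y j q.1 q.2, auxSplice k Y j q.2 q.1))
    (fun q => (auxSplice k Y j q.1 q.2, auxSplice k Y j q.2 q.1)) (by simp) (by simp)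
    (fun q _ => by simp [auxSplice_splice]) (fun q _ => by simp [auxSplice_splice]) ?_
  rintro ⟨u, v⟩ _
  simp only [hres, auxSplice_lo k Y j _ _ _ hlo, auxSplice_hi k Y j _ _ _ hhi, Prod.mk.injEq]
  by_cases h1 : (fun i : {i : Fin (k + 1) // (i : ℕ) ≤ j} => u i.1)
      = fun i : {i : Fin (k + 1) // (i : ℕ) ≤ j} => y i.1
  · by_cases h2 : v (idxLo k j) = y (idxLo k j)
    · have h3 : u (idxLo k j) = v (idxLo k j) := by
        rw [h2]; exact congrFun h1 ⟨idxLo k j, hlo⟩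
      by_cases h4 : u (idxHi k j) = y (idxHi k j)
      · simp [h1, h2, h4, aux_P_splice k Y P hP hMC j u v h3]
      · simp [h4]
    · simp [h2]
  · simp [h1]

theorem aux_msgRec_congr (n : ℕ) (φ : ∀ ℓ : ℕ, (Fin n → Y ℓ) → ℕ → ℕ)
    (ys ys' : ∀ ℓ : ℕ, Fin n → Y ℓ) (m : ℕ) (h : ∀ ℓ ≤ m, ys ℓ = ys' ℓ) :
    msgRec Y n φ ys m = msgRec Y n φ ys' m := by
  induction m with
  | zero => simp only [msgRec]; rw [h 0 le_rfl]
  | succ m ih =>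
    simp only [msgRec]
    rw [h (m + 1) le_rfl, ih fun ℓ hℓ => h ℓ (by omega)]

theorem aux_U (n : ℕ) (φ : ∀ ℓ : ℕ, (Fin n → Y ℓ) → ℕ → ℕ) (j : Fin k)
    (ω ω' : (∀ i : Fin (k + 1), Fin n → Y i) × Fin n) (hT : ω.2 = ω'.2)
    (ha : ∀ t, (fun i : {i : Fin (k + 1) // (i : ℕ) ≤ j} => ω.1 i.1 t)
      = fun i : {i : Fin (k + 1) // (i : ℕ) ≤ j} => ω'.1 i.1 t)
    (hpre : ∀ t : Fin n, (t : ℕ) < ω.2 → (fun i => ω.1 i t) = fun i => ω'.1 i t) :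
    UvarCM k Y n φ j ω = UvarCM k Y n φ j ω' := by
  unfold UvarCM
  refine Prod.ext ?_ (Prod.ext ?_ hT)
  · refine aux_msgRec_congr Y n φ _ _ _ fun ℓ hℓ => ?_
    unfold extendTup
    have : ℓ < k + 1 := by omega
    rw [dif_pos this, dif_pos this]
    funext t
    exact congrFun (ha t) ⟨⟨ℓ, this⟩, hℓ⟩
  · funext i t
    simp only [prefixAll, ← hT]
    split_ifs with h
    · rw [congrFun (hpre t h) i]
    · rfl

theorem aux_iid_nonneg (hP : IsPMF P) (n : ℕ) (ys : ∀ i : Fin (k + 1), Fin n → Y i) :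
    0 ≤ iidK k Y P n ys := Finset.prod_nonneg fun _ _ => hP.1 _

theorem aux_Delta_nonneg (hP : IsPMF P) (n : ℕ) (φ : ∀ ℓ : ℕ, (Fin n → Y ℓ) → ℕ → ℕ)
    (g : (Fin n → Y k) → ℕ → Bool) : 0 ≤ DeltaCM k Y P n φ g := by
  unfold DeltaCM probSet
  refine Finset.sum_nonneg fun ys _ => ?_
  split_ifs
  · exact aux_iid_nonneg k Y P hP n ys
  · exact le_rfl

theorem aux_ptilde_pmf (hP : IsPMF P) (n : ℕ) (φ : ∀ ℓ : ℕ, (Fin n → Y ℓ) → ℕ → ℕ)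
    (g : (Fin n → Y k) → ℕ → Bool) (hΔ : 0 < DeltaCM k Y P n φ g) :
    IsPMF (ptildeCM k Y P n φ g) := by
  classical
  constructor
  · intro ys
    unfold ptildeCM
    split_ifs
    · exact div_nonneg (aux_iid_nonneg k Y P hP n ys) hΔ.le
    · exact le_rfl
  · have : ∀ ys, ptildeCM k Y P n φ g ys
        = (if ys ∈ DsetCM k Y P n φ g then iidK k Y P n ys else 0) / DeltaCM k Y P n φ g := by
      intro ys
      unfold ptildeCM
      split_ifs <;> simp
    simp only [this]
    rw [← Finset.sum_div, div_eq_one_iff_eq hΔ.ne']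
    unfold DeltaCM probSet
    exact Finset.sum_congr rfl fun ys _ => by split_ifs <;> rfl

end MarkovAux
/-- asymptotic Markov chains at later hops. Under the `K`-hop change of
measure with `liminf_n Δ_k > 0`, and with `U_ℓ := (M̃_ℓ, Ỹ₀^{T−1},…,Ỹ_k^{T−1}, T)` and
`Ỹ_j := Ỹ_{j,T}`, for every `ℓ ∈ {2,…,k}` (here `ℓ = j+1` with `1 ≤ j`):
`lim_n I(Ỹ_ℓ,…,Ỹ_k; U_ℓ | Ỹ₀,…,Ỹ_{ℓ−1}) = 0`, and consequently
`lim_n I(U_ℓ; Ỹ_ℓ | Ỹ_{ℓ−1}) = 0`. -/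
theorem asymptotic_markov_later_hops
    (k : ℕ) (Y : ℕ → Type) [∀ i, Fintype (Y i)] [∀ i, Nonempty (Y i)]
    (hk : 1 ≤ k)
    (P : (∀ i : Fin (k + 1), Y i) → ℝ) (hP : IsPMF P) (hMC : IsMarkovChainK k Y P)
    (φ : ∀ n : ℕ, ∀ ℓ : ℕ, (Fin n → Y ℓ) → ℕ → ℕ)
    (g : ∀ n : ℕ, (Fin n → Y k) → ℕ → Bool)
    (hΔ : 0 < liminf (fun n => DeltaCM k Y P n (φ n) (g n)) atTop) :
    ∀ j : Fin k, 1 ≤ (j : ℕ) →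
      Tendsto (fun n => condMIOf (pfullCM k Y P n (φ n) (g n))
          (fun ω => (fun i : {i : Fin (k + 1) // (j : ℕ) + 1 ≤ (i : ℕ)} => ω.1 i.1 ω.2))
          (UvarCM k Y n (φ n) (j : ℕ))
          (fun ω => (fun i : {i : Fin (k + 1) // (i : ℕ) ≤ (j : ℕ)} => ω.1 i.1 ω.2)))
        atTop (nhds 0) ∧
      Tendsto (fun n => condMIOf (pfullCM k Y P n (φ n) (g n))
          (UvarCM k Y n (φ n) (j : ℕ))
          (fun ω => ω.1 (idxHi k j) ω.2)
          (fun ω => ω.1 (idxLo k j) ω.2)) atTop (nhds 0) := by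
  intro j _hj
  obtain ⟨c, hc0, hc⟩ := exists_between hΔ
  have hev : ∀ᶠ n in atTop, c < DeltaCM k Y P n (φ n) (g n) :=
    eventually_lt_of_lt_liminf hc
      (isBoundedUnder_of ⟨0, fun n => aux_Delta_nonneg k Y P hP n (φ n) (g n)⟩)
  have hlim : Tendsto (fun n : ℕ => -(1 / (n : ℝ)) * Real.logb 2 c) atTop (nhds 0) := by
    have := (tendsto_one_div_atTop_nhds_zero_nat (𝕜 := ℝ)).neg.mul_const (Real.logb 2 c)
    simpa using this
  have hmain : ∀ n : ℕ, 0 < n → c < DeltaCM k Y P n (φ n) (g n) →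
      -(1 / (n : ℝ)) * Real.logb 2 (DeltaCM k Y P n (φ n) (g n))
        ≤ -(1 / (n : ℝ)) * Real.logb 2 c := by
    intro n hn hcn
    have h1 := Real.logb_le_logb_of_le one_lt_two hc0 hcn.le
    have h2 : (0 : ℝ) ≤ 1 / (n : ℝ) := by positivity
    nlinarith
  have hinj : ∀ n : ℕ, Function.Injective
      (fun ys : (∀ i : Fin (k + 1), Fin n → Y i) => tupleSeq k Y ys) := by
    intro n ys ys' h
    funext i t
    exact congrFun (congrFun h t) i
  have hrP : ∀ n ys, ptildeCM k Y P n (φ n) (g n) ys ≠ 0 → ptildeCM k Y P n (φ n) (g n) ys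
      = (∏ t, P (tupleSeq k Y ys t)) / DeltaCM k Y P n (φ n) (g n) := by
    intro n ys h
    unfold ptildeCM at h ⊢
    split_ifs at h ⊢ with h1
    · rfl
    · exact absurd rfl h
  have hpn : ∀ n : ℕ, c < DeltaCM k Y P n (φ n) (g n) → ∀ ω, 0 ≤ pfullCM k Y P n (φ n) (g n) ω :=
    fun n hcn ω => div_nonneg
      ((aux_ptilde_pmf k Y P hP n (φ n) (g n) (hc0.trans hcn)).1 _) (Nat.cast_nonneg n)
  classical
  constructor
  · refine tendsto_of_tendsto_of_tendsto_of_le_of_le' tendsto_const_nhds hlim ?_ ?_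
    · filter_upwards [hev] with n hcn
      exact aux_condMI_nonneg _ (hpn n hcn) _ _ _
    · filter_upwards [hev, eventually_gt_atTop 0] with n hcn hn
      refine le_trans ?_ (hmain n hn hcn)
      exact aux_generic hn P hP (ptildeCM k Y P n (φ n) (g n))
        (aux_ptilde_pmf k Y P hP n (φ n) (g n) (hc0.trans hcn))
        (fun ys => tupleSeq k Y ys) (hinj n) _ (hc0.trans hcn) (hrP n)
        (fun y => fun i : {i : Fin (k + 1) // (i : ℕ) ≤ (j : ℕ)} => y i.1)
        (fun y => fun i : {i : Fin (k + 1) // (j : ℕ) + 1 ≤ (i : ℕ)} => y i.1)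
        (fun y => fun i : {i : Fin (k + 1) // (i : ℕ) ≤ (j : ℕ)} => y i.1)
        (fun _ _ h => h) (fun _ _ => rfl) (UvarCM k Y n (φ n) (j : ℕ))
        (fun ω ω' h1 h2 h3 => aux_U k Y n (φ n) j ω ω' h1 h2 h3)
  · refine tendsto_of_tendsto_of_tendsto_of_le_of_le' tendsto_const_nhds hlim ?_ ?_
    · filter_upwards [hev] with n hcn
      rw [aux_condMI_symm]
      have : Fintype (Y (idxHi k j : Fin (k + 1))) := inferInstance
      exact aux_condMI_nonneg _ (hpn n hcn) _ _ _
    · filter_upwards [hev, eventually_gt_atTop 0] with n hcn hn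
      refine le_trans ?_ (hmain n hn hcn)
      rw [aux_condMI_symm]
      exact aux_generic hn P hP (ptildeCM k Y P n (φ n) (g n))
        (aux_ptilde_pmf k Y P hP n (φ n) (g n) (hc0.trans hcn))
        (fun ys => tupleSeq k Y ys) (hinj n) _ (hc0.trans hcn) (hrP n)
        (fun y => fun i : {i : Fin (k + 1) // (i : ℕ) ≤ (j : ℕ)} => y i.1)
        (fun y => y (idxHi k j))
        (fun y => y (idxLo k j))
        (fun _ _ h => congrFun h ⟨idxLo k j, le_rfl⟩) (fun y _ => aux_markov k Y P hP hMC j y)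
        (UvarCM k Y n (φ n) (j : ℕ))
        (fun ω ω' h1 h2 h3 => aux_U k Y n (φ n) j ω ω' h1 h2 h3)
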